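/- Suppose given multiplicative characters λ₁,…,λ_r, μ₁,…,μ_s, λ'₁,…,λ'_{r'}, μ'₁,…,μ'_{s'} of k₀ and constants c ∈ ℂ^×, a ∈ k₀^×, such that for every finite extension k₁ of k₀ and every multiplicative character χ of k₁ one has ∏_{i=1}^r g(χ·(λ_i∘N)) · ∏_{j=1}^s g(χ⁻¹·(μ_j∘N)) = c^{[k₁:k₀]} · χ(a) · ∏_{k=1}^{r'} g(χ·(λ'_k∘N)) · ∏_{l=1}^{s'} g(χ⁻¹·(μ'_l∘N)), where N : k₁ → k₀ is the norm map, χ(a) means χ evaluated at the image of a in k₁, and all Gauss sums for characters of k₁ are formed with the additive character ψ∘Tr_{k₁/k₀}. Then r = r', s = s', the multiset {λ₁,…,λ_r} equals the multiset {λ'₁,…,λ'_{r'}}, and the multiset {μ₁,…,μ_s} equals the multiset {μ'₁,…,μ'_{s'}}. (Paper's Lemma 8.) -/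

import Mathlib

open Finset

theorem exVal (p : ℕ) [Fact p.Prime] : ∃ A : ValuationSubring ℂ, A.valuation (p : ℂ) < 1 := by
  let R : Subring ℂ := (Int.castRingHom ℂ).range
  let x : R := ⟨(p : ℂ), ⟨(p : ℤ), by simp⟩⟩
  have hI : Ideal.span {x} ≠ ⊤ := by
    intro h
    rw [Ideal.span_singleton_eq_top] at h
    obtain ⟨⟨y, ⟨m, hm⟩⟩, hy⟩ := isUnit_iff_exists_inv.mp h
    have h2 := congrArg Subtype.val hy
    simp only [x, Subring.coe_mul, Subring.coe_one] at h2
    rw [← hm] at h2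
    have h3 : (p : ℤ) * m = 1 := by
      have : (((p : ℤ) * m : ℤ) : ℂ) = ((1 : ℤ) : ℂ) := by
        push_cast; simpa using h2
      exact_mod_cast this
    have h4 : (p : ℤ) ∣ 1 := ⟨m, h3.symm⟩
    have h5 : p ∣ 1 := by exact_mod_cast h4
    exact (Fact.out : p.Prime).one_lt.ne' (Nat.dvd_one.mp h5)
  obtain ⟨B, -, hB⟩ := Ideal.image_subset_nonunits_valuationSubring _ hI
  refine ⟨B, ?_⟩
  have : (p : ℂ) ∈ B.nonunits := hB ⟨x, Ideal.subset_span rfl, rfl⟩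
  exact this

theorem mem_of_integral (A : ValuationSubring ℂ) {x : ℂ} (hx : IsIntegral ℤ x) : x ∈ A := by
  have h : IsIntegral A x := hx.tower_top
  obtain ⟨y, hy⟩ := IsIntegrallyClosed.isIntegral_iff.mp h
  exact hy ▸ y.2

theorem val_root (A : ValuationSubring ℂ) {x : ℂ} {n : ℕ} (hn : n ≠ 0) (hx : x ^ n = 1) :
    A.valuation x = 1 := by
  have : A.valuation x ^ n = 1 := by rw [← map_pow, hx, map_one]
  exact (pow_eq_one_iff.mp this).resolve_right hn

theorem mem_of_root (A : ValuationSubring ℂ) {x : ℂ} {n : ℕ} (hn : n ≠ 0) (hx : x ^ n = 1) :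
    x ∈ A := (A.valuation_le_one_iff x).mp (val_root A hn hx).le

theorem val_sub_le (A : ValuationSubring ℂ) {x : ℂ} (hx : x ∈ A) (i : ℕ) :
    A.valuation (1 - x ^ i) ≤ A.valuation (1 - x) := by
  rw [← mul_neg_geom_sum, map_mul]
  have : (∑ j ∈ range i, x ^ j) ∈ A := sum_mem fun j _ => pow_mem hx j
  exact mul_le_of_le_one_right' ((A.valuation_le_one_iff _).mpr this)

theorem val_pi (A : ValuationSubring ℂ) (p : ℕ) [hp : Fact p.Prime] {ζ : ℂ}
    (hζ : IsPrimitiveRoot ζ p) : A.valuation (1 - ζ) ^ (p - 1) = A.valuation (p : ℂ) := by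
  obtain ⟨m, rfl⟩ : ∃ m, p = m + 1 := ⟨p - 1, by have := hp.out.pos; omega⟩
  have h1 := hζ.prod_one_sub_pow_eq_order
  have hζA : ζ ∈ A := mem_of_root A (Nat.succ_ne_zero m) hζ.pow_eq_one
  have h2 : ∀ k ∈ range m, A.valuation (1 - ζ ^ (k + 1)) = A.valuation (1 - ζ) := by
    intro k hk
    rw [mem_range] at hk
    apply le_antisymm (val_sub_le A hζA _)
    have hprim : IsPrimitiveRoot (ζ ^ (k + 1)) (m + 1) := by
      apply hζ.pow_of_coprime
      exact (Nat.coprime_of_lt_prime (by omega) (by omega) hp.out).symm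
    obtain ⟨j, -, hj⟩ := hprim.eq_pow_of_pow_eq_one hζ.pow_eq_one
    have := val_sub_le A (pow_mem hζA (k + 1)) j
    rwa [hj] at this
  have h3 := congrArg A.valuation h1
  rw [map_prod, prod_congr rfl h2, prod_const, card_range] at h3
  simpa using h3

theorem algClosed_res (A : ValuationSubring ℂ) : IsAlgClosed (IsLocalRing.ResidueField A) := by
  apply IsAlgClosed.of_exists_root
  intro q hq hirr
  have hq' : q ∈ Polynomial.lifts (IsLocalRing.residue A) := by
    rw [Polynomial.lifts_iff_coeff_lifts]
    intro n
    exact IsLocalRing.residue_surjective _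
  obtain ⟨Q, hQ, hdeg, hmon⟩ := Polynomial.lifts_and_degree_eq_and_monic hq' hq
  have : (Q.map (algebraMap A ℂ)).degree ≠ 0 := by
    rw [hmon.degree_map, hdeg]
    exact hirr.degree_pos.ne'
  obtain ⟨x, hx⟩ := IsAlgClosed.exists_root _ this
  have hx' : IsIntegral A x := ⟨Q, hmon, by simpa [Polynomial.IsRoot, Polynomial.eval_map] using hx⟩
  obtain ⟨y, hy⟩ := IsIntegrallyClosed.isIntegral_iff.mp hx'
  refine ⟨IsLocalRing.residue A y, ?_⟩
  rw [← hQ]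
  rw [Polynomial.eval_map, Polynomial.eval₂_hom]
  have : Q.eval y = 0 := by
    apply FaithfulSMul.algebraMap_injective A ℂ
    rw [map_zero, ← Polynomial.eval₂_hom, hy, ← Polynomial.eval_map]
    exact hx
  rw [this, map_zero]

theorem charP_res (A : ValuationSubring ℂ) (p : ℕ) [hp : Fact p.Prime]
   (h : A.valuation (p : ℂ) < 1) : CharP (IsLocalRing.ResidueField A) p := by
  have h1 : IsLocalRing.residue A (p : A) = 0 := by
    rw [IsLocalRing.residue_eq_zero_iff, A.valuation_lt_one_iff]
    simpa using h
  rw [map_natCast] at h1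
  exact (CharP.charP_iff_prime_eq_zero hp.out).mpr h1 

theorem exists_emb (A : ValuationSubring ℂ) (p : ℕ) [hp : Fact p.Prime]
   (h : A.valuation (p : ℂ) < 1) (k : Type) [Field k] [Finite k] [Algebra (ZMod p) k] :
   Nonempty (k →+* IsLocalRing.ResidueField A) := by
  have := algClosed_res A
  have := charP_res A p h
  let _ := ZMod.algebra (IsLocalRing.ResidueField A) p
  exact ⟨(IsAlgClosed.lift : k →ₐ[ZMod p] IsLocalRing.ResidueField A).toRingHom⟩

theorem exists_teich (A : ValuationSubring ℂ) (p : ℕ) [hp : Fact p.Prime]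
   (h : A.valuation (p : ℂ) < 1) (k : Type) [Field k] [Fintype k] [Algebra (ZMod p) k]
   (f : k →+* IsLocalRing.ResidueField A) :
   ∃ ω : MulChar k A, ∀ b, IsLocalRing.residue A (ω b) = f b := by
  classical
  have := charP_res A p h
  obtain ⟨g, hg⟩ := IsCyclic.exists_generator (α := kˣ)
  set n := Fintype.card kˣ with hn
  have hn0 : n ≠ 0 := Fintype.card_ne_zero
  have hz := Complex.isPrimitiveRoot_exp n hn0
  set z : ℂ := Complex.exp (2 * Real.pi * Complex.I / n)
  let Z : A := ⟨z, mem_of_root A hn0 hz.pow_eq_one⟩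
  have hZ : IsPrimitiveRoot Z n := by
    apply IsPrimitiveRoot.of_map_of_injective (f := A.subtype) (k := n) hz Subtype.val_injective
  have hcard : ((n : ℕ) : IsLocalRing.ResidueField A) ≠ 0 := by
    have h1 : (n : k) ≠ 0 := by
      rw [hn, Fintype.card_units, Nat.cast_sub Fintype.card_pos]
      simp
    intro h2
    apply h1
    apply f.injective
    simpa using h2
  have hZb : IsPrimitiveRoot (IsLocalRing.residue A Z) n := by
    have : NeZero ((n : ℕ) : IsLocalRing.ResidueField A) := ⟨hcard⟩
    rw [← Polynomial.isRoot_cyclotomic_iff]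
    have : (Polynomial.cyclotomic n A).IsRoot Z := hZ.isRoot_cyclotomic (Nat.pos_of_ne_zero hn0)
    rw [← Polynomial.map_cyclotomic n (IsLocalRing.residue A)]
    exact this.map
  have hfg : f g ^ n = 1 := by
    rw [← map_pow, ← Units.val_pow_eq_pow_val, pow_card_eq_one]; simp
  obtain ⟨i, hi, hi2⟩ := hZb.eq_pow_of_pow_eq_one hfg
  have hu : (hZ.isUnit hn0).unit ^ i ∈ rootsOfUnity (Fintype.card kˣ) A := by
    rw [mem_rootsOfUnity, ← pow_mul, mul_comm, pow_mul]
    have : (hZ.isUnit hn0).unit ^ n = 1 := by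
      ext; simp [hZ.pow_eq_one, ]
    rw [this, one_pow]
  refine ⟨MulChar.ofRootOfUnity hu hg, ?_⟩
  intro b
  by_cases hb : b = 0
  · subst hb; rw [MulChar.map_zero, map_zero, map_zero]
  obtain ⟨j, hj⟩ := (mem_powers_iff_mem_zpowers (x := g)).mpr (hg (Units.mk0 b hb))
  have : b = (g : k) ^ j := by
    have := congrArg Units.val hj
    simpa using this.symm
  rw [this, map_pow, MulChar.ofRootOfUnity_spec, map_pow, map_pow, ← hi2]
  simp

def ds (p a : ℕ) : ℕ := (Nat.digits p a).sum

theorem ds_rec {p : ℕ} (hp : 1 < p) (a : ℕ) : ds p a = a % p + ds p (a / p) := by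
  rcases Nat.eq_zero_or_pos a with rfl | h
  · simp [ds]
  · unfold ds
    rw [Nat.digits_def' hp h]; simp

theorem ds_zero (p : ℕ) : ds p 0 = 0 := by simp [ds]

theorem ds_le (p a : ℕ) : ds p a ≤ a := Nat.digit_sum_le p a

theorem ds_add {p : ℕ} (hp : 1 < p) (f : ℕ) : ∀ x y, x < p ^ f → 
    ds p (x + p ^ f * y) = ds p x + ds p y := by
  induction f with
  | zero => intro x y hx; simp at hx; subst hx; simp [ds_zero]
  | succ f ih =>
    intro x y hx
    have e : x + p ^ (f + 1) * y = x + p * (p ^ f * y) := by ring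
    rw [ds_rec hp (x + _), ds_rec hp x, e, Nat.add_mul_mod_self_left, 
      Nat.add_mul_div_left _ _ (by omega), ih, add_assoc]
    rw [Nat.div_lt_iff_lt_mul (by omega)]
    rwa [← pow_succ]

theorem ds_compl {p : ℕ} (hp : 1 < p) (n : ℕ) : ∀ a, a < p ^ n → 
    ds p (p ^ n - 1 - a) + ds p a = n * (p - 1) := by
  induction n with
  | zero => intro a ha; simp at ha; subst ha; simp [ds_zero]
  | succ n ih =>
    intro a ha
    have h1 : a / p < p ^ n := by
      rw [Nat.div_lt_iff_lt_mul (by omega)]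
      rwa [← pow_succ]
    have h2 := Nat.mod_lt a (show p > 0 by omega)
    have h3 := Nat.div_add_mod a p
    have e : p ^ (n + 1) - 1 - a = (p - 1 - a % p) + p * (p ^ n - 1 - a / p) := by
      obtain ⟨u, hu⟩ := Nat.exists_eq_add_of_lt h1
      have : p ^ n - 1 - a / p = u := by omega
      rw [this, pow_succ, hu]
      have h4 : (a / p + u + 1) * p = p * (a / p) + p * u + p := by ring
      rw [h4]; omega
    have hm : (p ^ (n + 1) - 1 - a) % p = p - 1 - a % p := by
      rw [e, Nat.add_mul_mod_self_left, Nat.mod_eq_of_lt (by omega)]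
    have hd : (p ^ (n + 1) - 1 - a) / p = p ^ n - 1 - a / p := by
      rw [e, Nat.add_mul_div_left _ _ (by omega), Nat.div_eq_of_lt (by omega), zero_add]
    rw [ds_rec hp (p ^ (n + 1) - 1 - a), ds_rec hp a, hm, hd, add_mul, ← ih _ h1]
    omega

section
set_option linter.unusedSectionVars false
variable {k : Type} [Field k] [Fintype k]

theorem val_mulChar_le (A : ValuationSubring ℂ) (χ : MulChar k ℂ) (b : k) :
    A.valuation (χ b) ≤ 1 := by
  classical
  by_cases hb : b = 0
  · subst hb; rw [MulChar.map_zero, map_zero]; exact zero_le_one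
  · apply le_of_eq
    apply val_root A (n := Fintype.card kˣ) Fintype.card_ne_zero
    rw [← map_pow]
    have : b ^ Fintype.card kˣ = 1 := by
      have := congrArg Units.val (pow_card_eq_one (x := Units.mk0 b hb))
      rw [Units.val_pow_eq_pow_val] at this
      exact this
    rw [this, map_one]

theorem val_mulChar_unit (A : ValuationSubring ℂ) (χ : MulChar k ℂ) {b : k} (hb : b ≠ 0) :
    A.valuation (χ b) = 1 := by
  apply le_antisymm (val_mulChar_le A χ b)
  have h := val_mulChar_le A χ b⁻¹
  have h2 : A.valuation (χ b) * A.valuation (χ b⁻¹) = 1 := by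
    rw [← map_mul, ← map_mul, mul_inv_cancel₀ hb, map_one, map_one]
  rw [← h2]
  exact mul_le_of_le_one_right' h

theorem val_addChar_le (A : ValuationSubring ℂ) (Ψ : AddChar k ℂ) (b : k) :
    A.valuation (Ψ b) ≤ 1 := by
  apply le_of_eq
  apply val_root A (n := Fintype.card k) Fintype.card_ne_zero
  rw [← AddChar.map_nsmul_eq_pow]
  simp

theorem val_gauss_le (A : ValuationSubring ℂ) (χ : MulChar k ℂ) (Ψ : AddChar k ℂ) :
    A.valuation (gaussSum χ Ψ) ≤ 1 := by
  unfold gaussSum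
  apply A.valuation.map_sum_le
  intro i _
  rw [map_mul]
  exact mul_le_one' (val_mulChar_le A χ i) (val_addChar_le A Ψ i)

theorem val_jacobi_le (A : ValuationSubring ℂ) (χ η : MulChar k ℂ) :
    A.valuation (jacobiSum χ η) ≤ 1 := by
  unfold jacobiSum
  apply A.valuation.map_sum_le
  intro i _
  rw [map_mul]
  exact mul_le_one' (val_mulChar_le A χ i) (val_mulChar_le A η _)

theorem val_gauss_mul (A : ValuationSubring ℂ) (χ η : MulChar k ℂ) {Ψ : AddChar k ℂ} (hΨ : Ψ ≠ 1) :
    A.valuation (gaussSum χ Ψ) * A.valuation (gaussSum η Ψ) ≤ A.valuation (gaussSum (χ * η) Ψ) := by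
  by_cases h : χ * η = 1
  · rw [h, gaussSum_one_left hΨ, Valuation.map_neg, map_one]
    exact mul_le_one' (val_gauss_le A _ _) (val_gauss_le A _ _)
  · rw [← map_mul, ← jacobiSum_mul_nontrivial h, map_mul]
    exact mul_le_of_le_one_right' (val_jacobi_le A _ _)

theorem val_gauss_inv (A : ValuationSubring ℂ) {χ : MulChar k ℂ} (hχ : χ ≠ 1) {Ψ : AddChar k ℂ}
    (hΨ : Ψ ≠ 1) :
    A.valuation (gaussSum χ Ψ) * A.valuation (gaussSum χ⁻¹ Ψ) = 
      A.valuation (Fintype.card k : ℂ) := by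
  have h := gaussSum_mul_gaussSum_eq_card hχ (AddChar.IsPrimitive.of_ne_one hΨ)
  rw [← h, map_mul, ← mul_gaussSum_inv_eq_gaussSum χ⁻¹ Ψ, map_mul, 
    val_mulChar_unit A χ⁻¹ (by simp), one_mul]

theorem gauss_reduce (A : ValuationSubring ℂ) {Ψ Ψ₀ : AddChar k ℂ} (hΨ : Ψ ≠ 1) (h0 : Ψ₀ ≠ 1)
    (χ : MulChar k ℂ) : A.valuation (gaussSum χ Ψ) = A.valuation (gaussSum χ Ψ₀) := by
  have hinj := AddChar.to_mulShift_inj_of_isPrimitive (AddChar.IsPrimitive.of_ne_one h0)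
  have hbij : Function.Bijective Ψ₀.mulShift := by
    classical
    rw [Fintype.bijective_iff_injective_and_card]
    exact ⟨hinj, AddChar.card_eq.symm⟩
  obtain ⟨a, rfl⟩ := hbij.2 Ψ
  have ha : a ≠ 0 := by
    rintro rfl
    simp at hΨ
  have := gaussSum_mulShift χ Ψ₀ (Units.mk0 a ha)
  rw [← this, map_mul]
  simp only [Units.val_mk0]
  rw [val_mulChar_unit A χ ha, one_mul]

variable (p : ℕ) [hp : Fact p.Prime] [Algebra (ZMod p) k]

noncomputable def psi0 {ζ : ℂ} (hζ : ζ ^ p = 1) : AddChar k ℂ :=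
  (AddChar.zmodChar p hζ).compAddMonoidHom (Algebra.trace (ZMod p) k).toAddMonoidHom

theorem psi0_apply {ζ : ℂ} (hζ : ζ ^ p = 1) (b : k) :
   psi0 p hζ b = ζ ^ (Algebra.trace (ZMod p) k b).val := rfl

theorem psi0_ne {ζ : ℂ} (hζ : IsPrimitiveRoot ζ p) : psi0 (k := k) p hζ.pow_eq_one ≠ 1 := by
  intro h
  obtain ⟨b, hb⟩ := Algebra.trace_surjective (ZMod p) k 1
  have h1 := DFunLike.congr_fun h b
  rw [psi0_apply, hb, ZMod.val_one, pow_one] at h1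
  exact hζ.ne_one hp.out.one_lt h1

theorem gauss_frob {ζ : ℂ} (hζ : ζ ^ p = 1) (χ : MulChar k ℂ) :
    gaussSum (χ ^ p) (psi0 p hζ) = gaussSum χ (psi0 p hζ) := by
  unfold gaussSum
  let e := FiniteField.frobeniusAlgEquivOfAlgebraic (ZMod p) k
  refine Fintype.sum_bijective e e.bijective _ _ ?_
  intro x
  have he : e x = x ^ p := by simp [e]
  rw [psi0_apply, psi0_apply]
  have : Algebra.trace (ZMod p) k (e x) = Algebra.trace (ZMod p) k x := 
    Algebra.trace_eq_of_algEquiv e x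
  rw [this, he, map_pow, MulChar.pow_apply' _ hp.out.ne_zero]

theorem sum_inv_trace [DecidableEq k] (hk : 2 < Fintype.card k) :
    ∑ x : kˣ, ((x⁻¹ : kˣ) : k) * algebraMap (ZMod p) k (Algebra.trace (ZMod p) k (x : k)) = -1 := by
  simp_rw [FiniteField.algebraMap_trace_eq_sum_pow, mul_sum]
  rw [sum_comm]
  have hQ : Fintype.card k = p ^ Module.finrank (ZMod p) k := by
    rw [Module.card_eq_pow_finrank (K := ZMod p), ZMod.card]
  have hc : ∀ i ∈ range (Module.finrank (ZMod p) k),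
     ∑ x : kˣ, ((x⁻¹ : kˣ) : k) * (x : k) ^ (Nat.card (ZMod p) ^ i) = if i = 0 then -1 else 0 := by
    intro i hi
    rw [mem_range] at hi
    have h1 : ∀ x : kˣ, ((x⁻¹ : kˣ) : k) * (x : k) ^ (Nat.card (ZMod p) ^ i) =
      (x : k) ^ (p ^ i - 1) := by
      intro x
      rw [Nat.card_zmod]
      have := hp.out.pos
      obtain ⟨m, hm⟩ : ∃ m, p ^ i = m + 1 := ⟨p ^ i - 1, by have := pow_pos this i; omega⟩
      rw [hm, pow_succ']; simp
    simp_rw [h1]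
    rw [FiniteField.sum_pow_units]
    congr 1
    rw [eq_iff_iff]
    constructor
    · intro h
      by_contra h0
      have h2 : 1 < p ^ i := Nat.one_lt_pow h0 hp.out.one_lt
      have h3 : p ^ i < p ^ Module.finrank (ZMod p) k := Nat.pow_lt_pow_right hp.out.one_lt hi
      have := Nat.le_of_dvd (by omega) h
      omega
    · rintro rfl; simp
  rw [sum_congr rfl hc, sum_ite_eq', if_pos]
  rw [mem_range]
  exact Module.finrank_pos

theorem val_gauss_teich (A : ValuationSubring ℂ) (hA : A.valuation (p : ℂ) < 1)
    {ζ : ℂ} (hζ : IsPrimitiveRoot ζ p) (hk : 2 < Fintype.card k)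
    (f : k →+* IsLocalRing.ResidueField A) (ω : MulChar k A)
    (hω : ∀ b, IsLocalRing.residue A (ω b) = f b) :
    A.valuation (gaussSum (ω⁻¹.ringHomComp A.subtype) (psi0 p hζ.pow_eq_one)) = 
    A.valuation (1 - ζ) := by
  classical
  let Z : A := ⟨ζ, mem_of_root A hp.out.ne_zero hζ.pow_eq_one⟩
  have hpi : A.valuation (1 - ζ) < 1 := by
    by_contra h
    rw [not_lt] at h
    rw [← val_pi A p hζ] at hA
    exact absurd hA (not_lt.mpr (one_le_pow_of_one_le' h _))
  have hZ1 : IsLocalRing.residue A Z = 1 := by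
    have : IsLocalRing.residue A (1 - Z) = 0 := by
      rw [IsLocalRing.residue_eq_zero_iff, A.valuation_lt_one_iff]
      exact hpi
    rw [map_sub, map_one, sub_eq_zero] at this
    exact this.symm
  let t : k → ℕ := fun b => (Algebra.trace (ZMod p) k b).val
  let S : A := ∑ x : kˣ, ω⁻¹ (x : k) * ∑ i ∈ range (t x), Z ^ i
  have hne : (ω⁻¹.ringHomComp A.subtype) ≠ 1 := by
    intro h
    have h1 : ∀ x : kˣ, (x : k) = 1 := by
      intro x
      have := DFunLike.congr_fun h ((x⁻¹ : kˣ) : k)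
      rw [MulChar.ringHomComp_apply, MulChar.inv_apply', MulChar.one_apply_coe] at this
      have h2 : ω (x : k) = 1 := Subtype.ext (by simpa using this)
      have h3 := hω x
      rw [h2, map_one] at h3
      exact f.injective (by rw [← h3, map_one])
    have h2 : Fintype.card kˣ ≤ 1 := by
      rw [Fintype.card_le_one_iff]
      intro a b; ext; rw [h1 a, h1 b]
    rw [Fintype.card_units] at h2
    omega
  have hG : gaussSum (ω⁻¹.ringHomComp A.subtype) (psi0 p hζ.pow_eq_one) = (ζ - 1) * (S : ℂ) := by
    have e1 : gaussSum (ω⁻¹.ringHomComp A.subtype) (psi0 p hζ.pow_eq_one) = 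
       ∑ b : k, (ω⁻¹.ringHomComp A.subtype) b * (ζ ^ t b - 1) := by
      simp_rw [mul_sub, mul_one, sum_sub_distrib]
      rw [MulChar.sum_eq_zero_of_ne_one hne, sub_zero]
      rfl
    have e2 : ∑ b : k, (ω⁻¹.ringHomComp A.subtype) b * (ζ ^ t b - 1) = 
       ∑ x : kˣ, (ω⁻¹.ringHomComp A.subtype) (x : k) * (ζ ^ t x - 1) := by
      symm
      apply Fintype.sum_of_injective (fun x : kˣ => (x : k)) Units.val_injective
      · intro i hi
        have : i = 0 := by
          by_contra h0
          exact hi ⟨Units.mk0 i h0, rfl⟩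
        subst this
        rw [MulChar.map_zero, zero_mul]
      · intro i; rfl
    rw [e1, e2]
    simp only [S]
    push_cast
    rw [mul_sum]
    apply sum_congr rfl
    intro x _
    rw [← mul_geom_sum]
    rw [MulChar.ringHomComp_apply]
    simp only [A.subtype_apply]
    ring
  have hS : IsLocalRing.residue A S = -1 := by
    have : IsLocalRing.residue A S = f (∑ x : kˣ, ((x⁻¹ : kˣ) : k) * algebraMap (ZMod p) k (Algebra.trace (ZMod p) k (x : k))) := by
      simp only [S, map_sum, map_mul, map_pow, hZ1, one_pow, sum_const, card_range]
      apply sum_congr rfl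
      intro x _
      rw [MulChar.inv_apply', hω, ← Units.val_inv_eq_inv_val]
      congr 1
      rw [nsmul_eq_mul, mul_one, ← map_natCast f]
      congr 1
      rw [← map_natCast (algebraMap (ZMod p) k), ZMod.natCast_val, ZMod.cast_id]
    rw [this, sum_inv_trace p hk, map_neg, map_one]
  have hSu : A.valuation (S : ℂ) = 1 := by
    rw [← A.valuation_eq_one_iff]
    by_contra hu
    have h1 : S ∈ IsLocalRing.maximalIdeal A := hu
    rw [← IsLocalRing.residue_eq_zero_iff, hS] at h1
    simp at h1
  rw [hG, map_mul, hSu, mul_one, Valuation.map_sub_swap]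
end

theorem stick (p : ℕ) [hp : Fact p.Prime] (k : Type) [Field k] [Fintype k] [Algebra (ZMod p) k]
    (A : ValuationSubring ℂ) (hA : A.valuation (p : ℂ) < 1)
    {ζ : ℂ} (hζ : IsPrimitiveRoot ζ p) (hk : 2 < Fintype.card k) :
    ∃ θ : MulChar k ℂ, (∀ χ : MulChar k ℂ, ∃ i : ℕ, χ = θ ^ i) ∧ 
      orderOf θ = Fintype.card k - 1 ∧
      ∀ Ψ : AddChar k ℂ, Ψ ≠ 1 → ∀ a, a < Fintype.card k - 1 → 
        A.valuation (gaussSum (θ ^ a) Ψ) = A.valuation (1 - ζ) ^ (ds p a) := by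
  classical
  obtain ⟨f⟩ := exists_emb A p hA k
  obtain ⟨ω, hω⟩ := exists_teich A p hA k f
  set θ : MulChar k ℂ := ω⁻¹.ringHomComp A.subtype with hθ
  have hcard : Nat.card (MulChar k ℂ) = Fintype.card k - 1 := by
    rw [MulChar.card_eq_card_units_of_hasEnoughRootsOfUnity, Nat.card_eq_fintype_card,
      Fintype.card_units]
  have hθpow : ∀ (i : ℕ) (x : kˣ), (θ ^ i) (x : k) = 1 → (x : k) ^ i = 1 := by
    intro i x h
    rw [MulChar.pow_apply_coe, hθ, MulChar.ringHomComp_apply] at h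
    have h2 : (ω⁻¹ (x : k)) ^ i = 1 := Subtype.ext (by simpa using h)
    have h3 := congrArg (IsLocalRing.residue A) h2
    rw [MulChar.inv_apply', map_pow, hω, map_one, ← map_pow, ← map_one f] at h3
    have h4 := f.injective h3
    rwa [inv_pow, inv_eq_one] at h4
  have hord : orderOf θ = Fintype.card k - 1 := by
    apply Nat.dvd_antisymm
    · rw [← hcard]; exact orderOf_dvd_natCard θ
    · obtain ⟨g, hg⟩ := IsCyclic.exists_generator (α := kˣ)
      rw [← Fintype.card_units, ← Nat.card_eq_fintype_card, ← orderOf_eq_card_of_forall_mem_zpowers hg]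
      apply orderOf_dvd_of_pow_eq_one
      ext
      rw [Units.val_pow_eq_pow_val]
      apply hθpow
      rw [pow_orderOf_eq_one, MulChar.one_apply_coe]
  have hfin : Finite (MulChar k ℂ) := Nat.finite_of_card_ne_zero (by omega)
  have hgen : ∀ χ : MulChar k ℂ, ∃ i : ℕ, χ = θ ^ i := by
    intro χ
    have h1 : Subgroup.zpowers θ = ⊤ := by
      rw [← Subgroup.card_eq_iff_eq_top, Nat.card_zpowers, hord, hcard]
    have h2 : χ ∈ Subgroup.zpowers θ := by rw [h1]; trivial
    obtain ⟨i, hi⟩ := (mem_powers_iff_mem_zpowers).mpr h2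
    exact ⟨i, hi.symm⟩
  refine ⟨θ, hgen, hord, ?_⟩
  intro Ψ hΨ
  have hΨ0 := psi0_ne (k := k) p hζ
  suffices h : ∀ a, a < Fintype.card k - 1 → 
      A.valuation (gaussSum (θ ^ a) (psi0 p hζ.pow_eq_one)) = A.valuation (1 - ζ) ^ (ds p a) by
    intro a ha
    rw [gauss_reduce A hΨ hΨ0, h a ha]
  set v := A.valuation
  set P := v (1 - ζ) with hP
  set G : ℕ → A.ValueGroup := fun a => v (gaussSum (θ ^ a) (psi0 p hζ.pow_eq_one)) with hG
  have hG1 : G 1 = P := by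
    simp only [hG, pow_one]
    exact val_gauss_teich p A hA hζ hk f ω hω
  have hG0 : G 0 = 1 := by
    simp only [hG, pow_zero]
    rw [gaussSum_one_left hΨ0, Valuation.map_neg, map_one]
  have hGadd : ∀ a b, G a * G b ≤ G (a + b) := by
    intro a b
    simp only [hG, pow_add]
    exact val_gauss_mul A _ _ hΨ0
  have hGp : ∀ a, G (p * a) = G a := by
    intro a
    simp only [hG]
    rw [mul_comm, pow_mul, gauss_frob]
  have hGsmall : ∀ a, P ^ a ≤ G a := by
    intro a
    induction a with
    | zero => rw [pow_zero, hG0]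
    | succ a ih =>
      refine le_trans ?_ (hGadd a 1)
      rw [pow_succ, hG1]
      exact mul_le_mul_left ih P
  have hle : ∀ a, P ^ (ds p a) ≤ G a := by
    intro a
    induction a using Nat.strong_induction_on with
    | _ a ih =>
      rcases Nat.eq_zero_or_pos a with rfl | h
      · rw [ds_zero, pow_zero, hG0]
      · have h1 := ih (a / p) (Nat.div_lt_self h hp.out.one_lt)
        rw [ds_rec hp.out.one_lt, pow_add]
        conv_rhs => rw [← Nat.mod_add_div a p]
        refine le_trans ?_ (hGadd _ _)
        rw [hGp]
        exact mul_le_mul' (hGsmall _) h1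
  have hQ : Fintype.card k = p ^ Module.finrank (ZMod p) k := by
    rw [Module.card_eq_pow_finrank (K := ZMod p), ZMod.card]
  have hpi := val_pi A p hζ
  have hP0 : P ≠ 0 := by
    rw [hP, Valuation.ne_zero_iff, sub_ne_zero]
    exact (hζ.ne_one hp.out.one_lt).symm
  intro a ha
  rcases Nat.eq_zero_or_pos a with rfl | h0
  · rw [ds_zero, pow_zero]; exact hG0
  change G a = _
  refine le_antisymm ?_ (hle a)
  have hne : θ ^ a ≠ 1 := by
    intro h
    have := Nat.le_of_dvd h0 (orderOf_dvd_of_pow_eq_one h)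
    omega
  have hinv : (θ ^ a)⁻¹ = θ ^ (Fintype.card k - 1 - a) := by
    rw [inv_eq_iff_mul_eq_one, ← pow_add, Nat.add_sub_cancel' ha.le, ← hord, pow_orderOf_eq_one]
  have h1 := val_gauss_inv A hne hΨ0
  rw [hinv] at h1
  change G a * G (Fintype.card k - 1 - a) = v _ at h1
  rw [hQ] at h1 ha
  have h2 := ds_compl hp.out.one_lt (Module.finrank (ZMod p) k) a (by omega)
  have h3 : v ((p ^ Module.finrank (ZMod p) k : ℕ) : ℂ) =
     P ^ (ds p (p ^ Module.finrank (ZMod p) k - 1 - a)) * P ^ (ds p a) := by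
    rw [← pow_add, h2, mul_comm, pow_mul]
    push_cast
    rw [map_pow, hpi]
  rw [h3] at h1
  have h4 := hle (p ^ Module.finrank (ZMod p) k - 1 - a)
  have h5 : P ^ (ds p (p ^ Module.finrank (ZMod p) k - 1 - a)) * G a ≤ 
    P ^ (ds p (p ^ Module.finrank (ZMod p) k - 1 - a)) * P ^ (ds p a) := by
    rw [← h1, mul_comm]
    exact mul_le_mul' le_rfl h4
  exact le_of_mul_le_mul_left h5 (zero_lt_iff.mpr (pow_ne_zero _ hP0))

section
set_option linter.unusedSectionVars false
variable (k0 k1 : Type) [Field k0] [Fintype k0] [Field k1] [Fintype k1] [Algebra k0 k1]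

noncomputable def nrm : MulChar k0 ℂ →* MulChar k1 ℂ where
  toFun η :=
    { toFun := fun b => η (Algebra.norm k0 b)
      map_one' := by simp
      map_mul' := by intro x y; simp
      map_nonunit' := by
        intro a ha
        have : a = 0 := by simpa using ha
        subst this
        have : FiniteDimensional k0 k1 := Module.Finite.of_finite
        rw [Algebra.norm_zero, MulChar.map_zero] }
  map_one' := by
    ext x
    change (1 : MulChar k0 ℂ) (Algebra.norm k0 (x : k1)) = _
    rw [MulChar.one_apply_coe, MulChar.one_apply]
    exact x.isUnit.map _
  map_mul' η η' := by
    ext x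
    change (η * η') (Algebra.norm k0 (x : k1)) = _
    rw [MulChar.mul_apply, MulChar.mul_apply]
    rfl

theorem nrm_apply (η : MulChar k0 ℂ) (b : k1) : nrm k0 k1 η b = η (Algebra.norm k0 b) := rfl

theorem nrm_inj {η : MulChar k0 ℂ} (h : nrm k0 k1 η = 1) : η = 1 := by
  ext x
  obtain ⟨y, hy⟩ := FiniteField.unitsMap_norm_surjective k0 k1 x
  have h1 := DFunLike.congr_fun h (y : k1)
  rw [nrm_apply, MulChar.one_apply_coe] at h1
  rw [MulChar.one_apply_coe, ← h1, ← hy]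
  rfl

theorem sum_eq_gauss (ψ : AddChar k0 ℂ) [DecidableEq k1] (χ : MulChar k1 ℂ) (η : MulChar k0 ℂ) :
    ∑ b : k1ˣ, χ (b : k1) * η (Algebra.norm k0 (b : k1)) * ψ (Algebra.trace k0 k1 (b : k1)) =
    gaussSum (χ * nrm k0 k1 η) (ψ.compAddMonoidHom (Algebra.trace k0 k1).toAddMonoidHom) := by
  unfold gaussSum
  apply Fintype.sum_of_injective (fun x : k1ˣ => (x : k1)) Units.val_injective
  · intro i hi
    have : i = 0 := by
      by_contra h0
      exact hi ⟨Units.mk0 i h0, rfl⟩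
    subst this
    rw [MulChar.map_zero, zero_mul]
  · intro i
    rw [MulChar.mul_apply, nrm_apply]
    rfl

theorem exists_E (q d T : ℕ) (hq : Fintype.card k0 = q) (hQ : Fintype.card k1 = q ^ d)
    (hT : (q - 1) * T = q ^ d - 1) (θ : MulChar k1 ℂ)
    (hgen : ∀ χ : MulChar k1 ℂ, ∃ i : ℕ, χ = θ ^ i) (hord : orderOf θ = q ^ d - 1) 
    (η : MulChar k0 ℂ) : ∃ e, e < q - 1 ∧ nrm k0 k1 η = θ ^ (e * T) ∧ (e = 0 ↔ η = 1) := by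
  have hq1 : 1 < q := hq ▸ Fintype.one_lt_card
  have hQ1 : 1 < q ^ d := hQ ▸ Fintype.one_lt_card
  obtain ⟨m, hm⟩ := hgen (nrm k0 k1 η)
  have h1 : η ^ (q - 1) = 1 := by
    rw [← hq]; exact orderOf_dvd_iff_pow_eq_one.mp (MulChar.orderOf_dvd_card_sub_one (χ := η))
  have h2 : θ ^ (m * (q - 1)) = 1 := by
    rw [pow_mul, ← hm, ← map_pow, h1, map_one]
  have h3 := orderOf_dvd_of_pow_eq_one h2
  rw [hord, ← hT, mul_comm m] at h3
  obtain ⟨e, rfl⟩ := Nat.dvd_of_mul_dvd_mul_left (by omega) h3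
  have hT0 : 0 < T := by
    rcases Nat.eq_zero_or_pos T with rfl | h
    · omega
    · exact h
  refine ⟨e % (q - 1), Nat.mod_lt _ (by omega), ?_, ?_⟩
  · rw [hm]
    conv_lhs => rw [← Nat.mod_add_div e (q - 1)]
    rw [mul_add, pow_add, ← mul_assoc, mul_comm T (q - 1), hT, pow_mul, pow_mul, ← hord,
      pow_orderOf_eq_one, one_pow, mul_one, ← pow_mul, mul_comm]
  · constructor
    · intro h
      apply nrm_inj k0 k1
      rw [hm]
      obtain ⟨u, rfl⟩ := Nat.dvd_of_mod_eq_zero h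
      rw [← mul_assoc, mul_comm T, hT, pow_mul, ← hord, pow_orderOf_eq_one, one_pow]
    · intro h
      subst h
      rw [map_one] at hm
      have := orderOf_dvd_of_pow_eq_one hm.symm
      rw [hord, ← hT, mul_comm] at this
      exact Nat.mod_eq_zero_of_dvd (Nat.dvd_of_mul_dvd_mul_left hT0 this)
end

theorem bound_sum {ι : Type} [DecidableEq ι] (D : ι → ℤ) (q M : ℤ) (ρ : ι)
   (h : ∀ i, |D i - (if i = ρ then M else 0)| ≤ q) {r : ℕ} (lam : Fin r → ι) :
   |∑ i, D (lam i) - M * (∑ i, if lam i = ρ then 1 else 0)| ≤ r * q := by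
  rw [mul_sum, ← sum_sub_distrib]
  refine (abs_sum_le_sum_abs _ _).trans ?_
  have : ∀ i ∈ (univ : Finset (Fin r)), |D (lam i) - M * (if lam i = ρ then 1 else 0)| ≤ q := by
    intro i _
    have := h (lam i)
    simpa using this
  refine (sum_le_sum this).trans ?_
  simp

theorem core {k0 : Type} [Field k0] [Fintype k0] [DecidableEq k0]
    (ψ : AddChar k0 ℂ) (hψ : ψ ≠ 1)
    {r s r' s' : ℕ}
    (lam : Fin r → MulChar k0 ℂ) (mu : Fin s → MulChar k0 ℂ)
    (lam' : Fin r' → MulChar k0 ℂ) (mu' : Fin s' → MulChar k0 ℂ)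
    (c : ℂ) (hc : c ≠ 0) (a : k0ˣ)
    (H : ∀ (k1 : Type) [Field k1] [Algebra k0 k1] [FiniteDimensional k0 k1]
        [Fintype k1] [DecidableEq k1], ∀ χ : MulChar k1 ℂ,
      (∏ i, -(∑ b : k1ˣ, χ (b : k1) * (lam i) (Algebra.norm k0 (b : k1)) *
          ψ (Algebra.trace k0 k1 (b : k1)))) *
      (∏ j, -(∑ b : k1ˣ, χ⁻¹ (b : k1) * (mu j) (Algebra.norm k0 (b : k1)) *
          ψ (Algebra.trace k0 k1 (b : k1)))) =
      c ^ (Module.finrank k0 k1) * χ (algebraMap k0 k1 (a : k0)) *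
      ((∏ i, -(∑ b : k1ˣ, χ (b : k1) * (lam' i) (Algebra.norm k0 (b : k1)) *
          ψ (Algebra.trace k0 k1 (b : k1)))) *
       (∏ j, -(∑ b : k1ˣ, χ⁻¹ (b : k1) * (mu' j) (Algebra.norm k0 (b : k1)) *
          ψ (Algebra.trace k0 k1 (b : k1)))))) :
    (List.ofFn lam : Multiset (MulChar k0 ℂ)) = (List.ofFn lam' : Multiset (MulChar k0 ℂ)) := by
  classical
  obtain ⟨p, hchar⟩ := CharP.exists k0
  have hp : Fact p.Prime := ⟨CharP.char_is_prime k0 p⟩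
  let _ := ZMod.algebra k0 p
  set f := Module.finrank (ZMod p) k0 with hf
  have hf0 : 0 < f := Module.finrank_pos
  have hq : Fintype.card k0 = p ^ f := by
    rw [Module.card_eq_pow_finrank (K := ZMod p), ZMod.card]
  set q := p ^ f with hqdef
  have hq1 : 1 < q := hq ▸ Fintype.one_lt_card
  ext ρ
  set d' := q * (r + s + r' + s') + 3 with hd'
  have hd0 : NeZero (d' + 1) := ⟨by omega⟩
  let k1 := FiniteField.Extension k0 p (d' + 1)
  let _ : Fintype k1 := Fintype.ofFinite k1
  have hfr : Module.finrank (ZMod p) k1 = f * (d' + 1) := FiniteField.finrank_zmod_extension k0 p _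
  have hQ : Fintype.card k1 = q ^ (d' + 1) := by
    rw [Module.card_eq_pow_finrank (K := ZMod p), ZMod.card, hfr, pow_mul]
  set T' := ∑ i ∈ range d', q ^ i with hT'
  set T := ∑ i ∈ range (d' + 1), q ^ i with hTdef
  have hTT' : T = 1 + q * T' := by
    rw [hTdef, sum_range_succ', hT', mul_sum, pow_zero, add_comm]
    simp_rw [pow_succ']
  have hT'0 : 0 < T' := by
    apply sum_pos
    · intro i _; positivity
    · exact ⟨0, by simp [hd']⟩
  have hT : (q - 1) * T = q ^ (d' + 1) - 1 := by
    rw [hTdef]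
    have h := Nat.geomSum_eq (m := q) hq1 (d' + 1)
    rw [h, Nat.mul_div_cancel' (Nat.sub_one_dvd_pow_sub_one q _)]
  have hT3 : 2 < T := by
    have : q * 1 ≤ q * T' := Nat.mul_le_mul_left q hT'0
    omega
  have hk2 : 2 < Fintype.card k1 := by
    rw [hQ]
    have : 1 * T ≤ (q - 1) * T := Nat.mul_le_mul_right T (by omega)
    omega
  obtain ⟨A, hA⟩ := exVal p
  have hζ := Complex.isPrimitiveRoot_exp p hp.out.ne_zero
  set ζ := Complex.exp (2 * Real.pi * Complex.I / p)
  obtain ⟨θ, hgen, hord, hst⟩ := stick p k1 A hA hζ hk2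
  rw [hQ] at hord hst
  set Ψ : AddChar k1 ℂ := ψ.compAddMonoidHom (Algebra.trace k0 k1).toAddMonoidHom with hΨdef
  have hΨ : Ψ ≠ 1 := by
    intro h
    apply hψ
    ext x
    obtain ⟨y, rfl⟩ := Algebra.trace_surjective k0 k1 x
    exact DFunLike.congr_fun h y
  have hst := hst Ψ hΨ
  set P := A.valuation (1 - ζ) with hPdef
  have hP0 : P ≠ 0 := by
    rw [hPdef, Valuation.ne_zero_iff, sub_ne_zero]
    exact (hζ.ne_one hp.out.one_lt).symm
  have hP1 : P < 1 := by
    by_contra h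
    rw [not_lt] at h
    rw [← val_pi A p hζ] at hA
    exact absurd hA (not_lt.mpr (one_le_pow_of_one_le' h _))
  choose E hElt hE hE0 using exists_E k0 k1 q (d' + 1) T hq hQ hT θ hgen hord
  have hET : ∀ η, E η * T + T ≤ q ^ (d' + 1) - 1 := by
    intro η
    rw [← hT, ← Nat.succ_mul]
    exact Nat.mul_le_mul_right T (hElt η)
  set χ₁ : MulChar k1 ℂ := nrm k0 k1 ρ⁻¹ with hχ₁
  set χ₂ : MulChar k1 ℂ := nrm k0 k1 ρ⁻¹ * θ⁻¹ with hχ₂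
  set Q := q ^ (d' + 1) with hQdef
  set x1 : MulChar k0 ℂ → ℕ := fun l => ds p (E (ρ⁻¹ * l) * T) with hx1
  set x2 : MulChar k0 ℂ → ℕ := fun l => 
    if E (ρ⁻¹ * l) = 0 then ds p (Q - 1 - 1) else ds p (E (ρ⁻¹ * l) * T - 1) with hx2
  set y1 : MulChar k0 ℂ → ℕ := fun m => ds p (E (ρ * m) * T) with hy1
  set y2 : MulChar k0 ℂ → ℕ := fun m => ds p (E (ρ * m) * T + 1) with hy2
  have vx1 : ∀ l, A.valuation (gaussSum (χ₁ * nrm k0 k1 l) Ψ) = P ^ x1 l := by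
    intro l
    have := hET (ρ⁻¹ * l)
    rw [hχ₁, ← map_mul, hE, hst _ (by omega)]
  have vy1 : ∀ l, A.valuation (gaussSum (χ₁⁻¹ * nrm k0 k1 l) Ψ) = P ^ y1 l := by
    intro l
    have := hET (ρ * l)
    rw [hχ₁, map_inv, inv_inv, ← map_mul, hE, hst _ (by omega)]
  have vy2 : ∀ l, A.valuation (gaussSum (χ₂⁻¹ * nrm k0 k1 l) Ψ) = P ^ y2 l := by
    intro l
    have := hET (ρ * l)
    have e : χ₂⁻¹ * nrm k0 k1 l = θ ^ (E (ρ * l) * T + 1) := by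
      rw [hχ₂, mul_inv, map_inv, inv_inv, inv_inv, pow_succ, ← hE, map_mul]
      exact mul_right_comm _ _ _
    rw [e, hst _ (by omega)]
  have vx2 : ∀ l, A.valuation (gaussSum (χ₂ * nrm k0 k1 l) Ψ) = P ^ x2 l := by
    intro l
    have := hET (ρ⁻¹ * l)
    have e : χ₂ * nrm k0 k1 l = θ ^ (E (ρ⁻¹ * l) * T) * θ⁻¹ := by
      rw [hχ₂, ← hE, map_mul]
      exact mul_right_comm _ _ _
    simp only [hx2]
    split_ifs with h
    · have e2 : θ⁻¹ = θ ^ (Q - 1 - 1) := by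
        rw [inv_eq_iff_mul_eq_one, ← pow_succ', Nat.sub_add_cancel (by omega), ← hord, 
          pow_orderOf_eq_one]
      rw [e, h, zero_mul, pow_zero, one_mul, e2, hst _ (by omega)]
    · have h1 : 1 * T ≤ E (ρ⁻¹ * l) * T := Nat.mul_le_mul_right T (by omega)
      have e2 : θ ^ (E (ρ⁻¹ * l) * T) * θ⁻¹ = θ ^ (E (ρ⁻¹ * l) * T - 1) := by
        rw [mul_inv_eq_iff_eq_mul, ← pow_succ, Nat.sub_add_cancel (by omega)]
      rw [e, e2, hst _ (by omega)]
  have ha : (algebraMap k0 k1 (a : k0)) ≠ 0 := by simp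
  have h1 := congrArg A.valuation (H k1 χ₁)
  have h2 := congrArg A.valuation (H k1 χ₂)
  simp only [sum_eq_gauss, map_mul, map_prod, Valuation.map_neg] at h1 h2
  simp only [← hΨdef, vx1, vy1, vx2, vy2, val_mulChar_unit A _ ha, mul_one, 
    prod_pow_eq_pow_sum, ← pow_add] at h1 h2
  have hC : A.valuation (c ^ Module.finrank k0 k1) ≠ 0 := by
    rw [Valuation.ne_zero_iff]; exact pow_ne_zero _ hc
  set C := A.valuation (c ^ Module.finrank k0 k1)
  have h3 : (∑ i, x1 (lam i) + ∑ i, y1 (mu i)) + (∑ i, x2 (lam' i) + ∑ i, y2 (mu' i)) =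
    (∑ i, x2 (lam i) + ∑ i, y2 (mu i)) + (∑ i, x1 (lam' i) + ∑ i, y1 (mu' i)) := by
    have h4 : P ^ ((∑ i, x1 (lam i) + ∑ i, y1 (mu i)) + (∑ i, x2 (lam' i) + ∑ i, y2 (mu' i))) =
      P ^ ((∑ i, x2 (lam i) + ∑ i, y2 (mu i)) + (∑ i, x1 (lam' i) + ∑ i, y1 (mu' i))) := by
      rw [pow_add, h1, pow_add _ (_ + _) (_ + _), h2]
      exact mul_right_comm _ _ _
    exact (pow_right_strictAnti₀ (zero_lt_iff.mpr hP0) hP1).injective h4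
  set M := ds p (Q - 1 - 1) with hM
  have hMbig : q * (r + s + r' + s') < M := by
    have h5 := ds_compl hp.out.one_lt (f * (d' + 1)) 1 (by rw [pow_mul, ← hqdef, ← hQdef, ← hQ]; omega)
    rw [pow_mul, ← hqdef, ← hQdef, ← hM] at h5
    have h6 := ds_le p 1
    have h7 : 1 * (d' + 1) ≤ f * (d' + 1) := Nat.mul_le_mul_right _ hf0
    have h8 : f * (d' + 1) * 1 ≤ f * (d' + 1) * (p - 1) := 
      Nat.mul_le_mul_left _ (by have := hp.out.one_lt; omega)
    omega
  have e1 : ∀ e, e < q → ds p (e * T) = ds p e + ds p (e * T') := by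
    intro e he
    rw [← ds_add hp.out.one_lt f e _ he, hTT']
    congr 1; ring
  have e2 : ∀ e, e + 1 < q → ds p (e * T + 1) = ds p (e + 1) + ds p (e * T') := by
    intro e he
    rw [← ds_add hp.out.one_lt f (e + 1) _ he, hTT']
    congr 1; ring
  have e3 : ∀ e, e < q → e ≠ 0 → ds p (e * T - 1) = ds p (e - 1) + ds p (e * T') := by
    intro e he h0
    obtain ⟨u, rfl⟩ := Nat.exists_eq_succ_of_ne_zero h0
    rw [← ds_add hp.out.one_lt f (u + 1 - 1) _ (by omega), hTT']
    congr 1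
    have : (u.succ) * (1 + q * T') = u + 1 + p ^ f * (u.succ * T') := by
      rw [← hqdef, Nat.succ_eq_add_one]; ring
    rw [this]
    omega
  have hDx : ∀ l, |((x2 l : ℤ) - x1 l) - (if l = ρ then (M : ℤ) else 0)| ≤ (q : ℤ) := by
    intro l
    have hlt := hElt (ρ⁻¹ * l)
    have h0 : E (ρ⁻¹ * l) = 0 ↔ l = ρ := by
      rw [hE0, inv_mul_eq_one, eq_comm]
    simp only [hx1, hx2]
    by_cases h : l = ρ
    · rw [if_pos h, if_pos (h0.mpr h), h0.mpr h, zero_mul, ds_zero]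
      simp
    · have h' := mt h0.mp h
      rw [if_neg h, if_neg h', e1 _ (by omega), e3 _ (by omega) h', abs_le]
      have t1 := ds_le p (E (ρ⁻¹ * l))
      have t2 := ds_le p (E (ρ⁻¹ * l) - 1)
      push_cast
      constructor <;> omega
  have hDy : ∀ l, |((y2 l : ℤ) - y1 l) - (if l = ρ then (0 : ℤ) else 0)| ≤ (q : ℤ) := by
    intro l
    have hlt := hElt (ρ * l)
    simp only [hy1, hy2]
    rw [ite_self, e1 _ (by omega), e2 _ (by omega), abs_le]
    have t1 := ds_le p (E (ρ * l))
    have t2 := ds_le p (E (ρ * l) + 1)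
    push_cast
    constructor <;> omega
  have b1 := bound_sum (fun l => (x2 l : ℤ) - x1 l) q M ρ hDx lam
  have b2 := bound_sum (fun l => (x2 l : ℤ) - x1 l) q M ρ hDx lam'
  have b3 := bound_sum (fun l => (y2 l : ℤ) - y1 l) q 0 ρ hDy mu
  have b4 := bound_sum (fun l => (y2 l : ℤ) - y1 l) q 0 ρ hDy mu'
  have cnt : ∀ {r : ℕ} (lam : Fin r → MulChar k0 ℂ), 
     (∑ i, if lam i = ρ then (1 : ℤ) else 0) = 
      (Multiset.count ρ (List.ofFn lam : Multiset (MulChar k0 ℂ)) : ℤ) := by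
    intro r lam
    rw [← Fin.univ_val_map, Multiset.count_map, sum_boole]
    simp only [eq_comm (a := ρ)]
    rfl
  rw [cnt] at b1 b2
  simp only [sum_sub_distrib, zero_mul, sub_zero] at b1 b2 b3 b4
  have h3' : ((∑ i, (x1 (lam i) : ℤ) + ∑ i, (y1 (mu i) : ℤ)) + (∑ i, (x2 (lam' i) : ℤ) + ∑ i, (y2 (mu' i) : ℤ))) =
    (∑ i, (x2 (lam i) : ℤ) + ∑ i, (y2 (mu i) : ℤ)) + (∑ i, (x1 (lam' i) : ℤ) + ∑ i, (y1 (mu' i) : ℤ)) := by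
    exact_mod_cast h3
  set n1 := Multiset.count ρ (List.ofFn lam : Multiset (MulChar k0 ℂ))
  set n2 := Multiset.count ρ (List.ofFn lam' : Multiset (MulChar k0 ℂ))
  rw [abs_le] at b1 b2 b3 b4
  have hMb : (q : ℤ) * (r + s + r' + s') < M := by exact_mod_cast hMbig
  have hfin : |(M : ℤ) * ((n1 : ℤ) - n2)| < M * 1 := by
    rw [abs_lt]
    constructor <;> linarith
  have hMpos : (0 : ℤ) < M := by
    have : 0 < M := by omega
    exact_mod_cast this
  rw [abs_mul, abs_of_pos hMpos] at hfin
  have h9 := lt_of_mul_lt_mul_left hfin hMpos.le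
  rw [Int.abs_lt_one_iff] at h9
  omega

theorem ofFn_len {α : Type} {r r' : ℕ} (f : Fin r → α) (g : Fin r' → α)
    (h : (List.ofFn f : Multiset α) = (List.ofFn g : Multiset α)) : r = r' := by
  simpa using congrArg Multiset.card h

/-- Lemma 8: an identity of products of Gauss sums
`∏ g(χ(λᵢ∘N)) ∏ g(χ⁻¹(μⱼ∘N)) = c^{[k₁:k₀]} χ(a) ∏ g(χ(λ'ₖ∘N)) ∏ g(χ⁻¹(μ'ₗ∘N))`,
valid for every multiplicative character `χ` of every finite extension `k₁` of `k₀`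
(with Gauss sums formed with `ψ∘Tr` and `g(χ) = -Σ_{b} χ(b)ψ_F(b)`), forces the
collections `(λᵢ)`, `(λ'ₖ)` (resp. `(μⱼ)`, `(μ'ₗ)`) to coincide as multisets. -/
theorem lemma8_gauss_sum_rigidity {k0 : Type} [Field k0] [Fintype k0] [DecidableEq k0]
    (ψ : AddChar k0 ℂ) (hψ : ψ ≠ 1)
    {r s r' s' : ℕ}
    (lam : Fin r → MulChar k0 ℂ) (mu : Fin s → MulChar k0 ℂ)
    (lam' : Fin r' → MulChar k0 ℂ) (mu' : Fin s' → MulChar k0 ℂ)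
    (c : ℂ) (hc : c ≠ 0) (a : k0ˣ)
    (H : ∀ (k1 : Type) [Field k1] [Algebra k0 k1] [FiniteDimensional k0 k1]
        [Fintype k1] [DecidableEq k1], ∀ χ : MulChar k1 ℂ,
      (∏ i, -(∑ b : k1ˣ, χ (b : k1) * (lam i) (Algebra.norm k0 (b : k1)) *
          ψ (Algebra.trace k0 k1 (b : k1)))) *
      (∏ j, -(∑ b : k1ˣ, χ⁻¹ (b : k1) * (mu j) (Algebra.norm k0 (b : k1)) *
          ψ (Algebra.trace k0 k1 (b : k1)))) =
      c ^ (Module.finrank k0 k1) * χ (algebraMap k0 k1 (a : k0)) *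
      ((∏ i, -(∑ b : k1ˣ, χ (b : k1) * (lam' i) (Algebra.norm k0 (b : k1)) *
          ψ (Algebra.trace k0 k1 (b : k1)))) *
       (∏ j, -(∑ b : k1ˣ, χ⁻¹ (b : k1) * (mu' j) (Algebra.norm k0 (b : k1)) *
          ψ (Algebra.trace k0 k1 (b : k1)))))) :
    r = r' ∧ s = s' ∧
      (List.ofFn lam : Multiset (MulChar k0 ℂ)) = (List.ofFn lam' : Multiset (MulChar k0 ℂ)) ∧
      (List.ofFn mu : Multiset (MulChar k0 ℂ)) = (List.ofFn mu' : Multiset (MulChar k0 ℂ)) := by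
  have h1 := core ψ hψ lam mu lam' mu' c hc a H
  have h2 : (List.ofFn mu : Multiset (MulChar k0 ℂ)) = (List.ofFn mu' : Multiset (MulChar k0 ℂ)) := by
    apply core ψ hψ mu lam mu' lam' c hc a⁻¹
    intro k1 _ _ _ _ _ χ
    have h := H k1 χ⁻¹
    rw [inv_inv] at h
    rw [mul_comm, h, mul_comm (∏ i, _) (∏ j, _)]
    congr 2
    rw [MulChar.inv_apply', ← map_inv₀, Units.val_inv_eq_inv_val]
  exact ⟨ofFn_len _ _ h1, ofFn_len _ _ h2, h1, h2⟩
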